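/- Let q be an odd prime power of the form q = 2am − 1 where a is an odd positive integer and m a positive integer. Then for all integers c_1, c_2, c_3 ≥ 0 with c_1 + c_2 ≤ a, c_1 + c_3 ≤ a and c_1 + c_2 + c_3 ≥ 1, and every integer s with 1 ≤ s ≤ (a+1)m − 2, there exists a linear code C over 𝔽_{q²} of length n = (c_2 + c_3)(q²−1)/(2a) + c_1((q²−1)/a − q + 1), dimension n − s, and minimum distance s + 1, such that C^{⊥H} ⊆ C. -/

import Mathlib

/-- Hamming weight: the number of nonzero coordinates. -/
noncomputable def wt {F : Type*} [Zero F] {n : ℕ} (x : Fin n → F) : ℕ :=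
  Set.ncard {i | x i ≠ 0}

/-- The Hermitian dual code of a linear code C ⊆ (F_{q²})^n. -/
noncomputable def dualH {F : Type*} [Field F] (q n : ℕ) (C : Submodule F (Fin n → F)) :
    Submodule F (Fin n → F) where
  carrier := {x | ∀ y ∈ C, ∑ i, x i * (y i) ^ q = 0}
  add_mem' := by
    intro a b ha hb y hy
    simp only [Set.mem_setOf_eq] at *
    simp [add_mul, Finset.sum_add_distrib, ha y hy, hb y hy]
  zero_mem' := by
    intro y hy; simp
  smul_mem' := by
    intro c x hx y hy
    simp only [Set.mem_setOf_eq] at *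
    simp [smul_eq_mul, mul_assoc, ← Finset.mul_sum, hx y hy]

open Finset

/-!
The generalized Reed–Solomon code spanned by the words `(vᵢ bᵢʲ)ᵢ`, `j < s`, is Hermitian
self-orthogonal exactly when the weights `wᵢ = vᵢ ^ (q + 1) ∈ 𝔽_q` satisfy
`∑ wᵢ bᵢ ^ (q j + l) = 0` for `j, l < s`; its Hermitian dual is then a dual-containing MDS code.

The evaluation points come in blocks on which such weights can be written down, with `q + 1 = 2am`:

* the fibre `x ^ (m(q-1)) = u ^ (m(q-1))` carries the weights `u ^ m * x ^ (q+1-m)`;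
* the fibre `x ^ (2m(q-1)) = u ^ (2m(q-1))` with `u 𝔽_q` removed carries the weights
  `h * (u * x ^ q - u ^ q * x)`, where `h ^ q = -h`; they vanish exactly on `u 𝔽_q`.

The orthogonality relations become power sums over a fibre of `x ↦ x ^ K`. Such a sum vanishes
unless `K` divides the exponent, which the bound on `s` rules out.
-/

section Weight

theorem wt_eq_card_filter {R : Type*} [Zero R] [DecidableEq R] {n : ℕ} (x : Fin n → R) :
    wt x = #{i | x i ≠ 0} := by
  rw [wt, ← Set.ncard_coe_finset, coe_filter_univ]

theorem wt_le {R : Type*} [Zero R] {n : ℕ} (x : Fin n → R) : wt x ≤ n := by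
  classical
  simpa only [wt_eq_card_filter, card_univ, Fintype.card_fin] using
    card_le_univ (univ.filter fun i => x i ≠ 0)

theorem wt_mul_of_forall_ne_zero {R : Type*} [MulZeroClass R] [NoZeroDivisors R] {n : ℕ}
    (x : Fin n → R) {u : Fin n → R} (hu : ∀ i, u i ≠ 0) : wt (fun i => x i * u i) = wt x := by
  simp only [wt, ne_eq, mul_eq_zero, hu, or_false]

theorem lt_wt_of_sum_mul_pow_eq_zero {R : Type*} [CommRing R] [IsDomain R] {n s : ℕ}
    {b x : Fin n → R} (hb : Function.Injective b) (hx : x ≠ 0)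
    (h : ∀ j < s, ∑ i, x i * b i ^ j = 0) : s < wt x := by
  classical
  by_contra! hle
  let e := ({i | x i ≠ 0} : Finset (Fin n)).equivFin
  have hcard : #{i | x i ≠ 0} ≤ s := wt_eq_card_filter x ▸ hle
  have hsupp : (fun k => x (e.symm k)) = 0 := by
    refine Matrix.eq_zero_of_forall_pow_sum_mul_pow_eq_zero (f := fun k => b (e.symm k))
      (hb.comp (Subtype.val_injective.comp e.symm.injective)) fun j => ?_
    rw [e.symm.sum_comp fun i => x i * b i ^ (j : ℕ),
      sum_coe_sort _ fun i => x i * b i ^ (j : ℕ),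
      sum_filter_of_ne fun i _ hi => left_ne_zero_of_mul hi]
    exact h j (j.2.trans_le hcard)
  obtain ⟨i, hi⟩ := Function.ne_iff.mp hx
  exact hi (by simpa using congrFun hsupp (e ⟨i, by simpa using hi⟩))

end Weight

section Singleton

variable {F : Type*} [Field F] {n s : ℕ} {C : Submodule F (Fin n → F)}

theorem exists_wt_add_finrank_le (hC : C ≠ ⊥) :
    ∃ x ∈ C, x ≠ 0 ∧ wt x + Module.finrank F C ≤ n + 1 := by
  classical
  have hpos : 0 < Module.finrank F C := Nat.pos_of_ne_zero (Submodule.finrank_eq_zero.not.mpr hC)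
  have hle : Module.finrank F C ≤ n := by simpa using Submodule.finrank_le C
  -- Some nonzero word of `C` vanishes on the first `finrank F C - 1` coordinates.
  let ι : Fin (Module.finrank F C - 1) ↪ Fin n := Fin.castLEEmb (by omega)
  have hker : (LinearMap.funLeft F F ι ∘ₗ C.subtype).ker ≠ ⊥ :=
    LinearMap.ker_ne_bot_of_finrank_lt (by rw [Module.finrank_fin_fun]; omega)
  obtain ⟨⟨x, hxC⟩, hx, hx0⟩ := Submodule.exists_mem_ne_zero_of_ne_bot hker
  refine ⟨x, hxC, fun h => hx0 (Subtype.ext h), ?_⟩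
  have hzeros : univ.map ι ⊆ univ.filter fun i => x i = 0 := fun i hi => by
    obtain ⟨k, -, rfl⟩ := mem_map.mp hi
    exact mem_filter.mpr ⟨mem_univ _, congrFun hx k⟩
  have hcard := card_le_card hzeros
  have hsplit := card_filter_add_card_filter_not (s := univ) fun i => x i = 0
  simp only [card_map, card_univ, Fintype.card_fin] at hcard hsplit
  simp only [wt_eq_card_filter, ne_eq]
  omega

theorem finrank_eq_and_isLeast_wt (hs : s < n) (hdim : n ≤ Module.finrank F C + s)
    (hwt : ∀ x ∈ C, x ≠ 0 → s < wt x) :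
    Module.finrank F C = n - s ∧ IsLeast {d : ℕ | ∃ x ∈ C, x ≠ 0 ∧ wt x = d} (s + 1) := by
  have hC : C ≠ ⊥ := by
    rintro rfl
    rw [finrank_bot] at hdim
    omega
  obtain ⟨x, hxC, hx0, hx⟩ := exists_wt_add_finrank_le hC
  have hsx := hwt x hxC hx0
  refine ⟨by omega, ⟨x, hxC, hx0, by omega⟩, ?_⟩
  rintro _ ⟨y, hyC, hy0, rfl⟩
  exact hwt y hyC hy0

end Singleton

section HermitianDual

variable {F : Type*} [Field F] {q n : ℕ}

theorem dualH_anti {C D : Submodule F (Fin n → F)} (h : C ≤ D) : dualH q n D ≤ dualH q n C :=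
  fun _ hx y hy => hx y (h hy)

theorem mem_dualH_span_range (φ : F →+* F) (hφ : ∀ x, φ x = x ^ q) {ι : Type*}
    {r : ι → Fin n → F} {x : Fin n → F} :
    x ∈ dualH q n (Submodule.span F (Set.range r)) ↔ ∀ j, ∑ i, x i * r j i ^ q = 0 := by
  refine ⟨fun hx j => hx _ (Submodule.subset_span ⟨j, rfl⟩), fun hx y hy => ?_⟩
  simp only [← hφ] at hx ⊢
  induction hy using Submodule.span_induction with
  | mem y hy => obtain ⟨j, rfl⟩ := hy; exact hx j
  | zero => simp
  | add y z _ _ hy hz => simp [mul_add, sum_add_distrib, hy, hz]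
  | smul c y _ hy =>
    simp only [Pi.smul_apply, smul_eq_mul, map_mul, mul_left_comm _ (φ c), ← mul_sum, hy, mul_zero]

theorem le_finrank_dualH_add_finrank (φ : F →+* F) (hφ : ∀ x, φ x = x ^ q)
    (C : Submodule F (Fin n → F)) :
    n ≤ Module.finrank F (dualH q n C) + Module.finrank F C := by
  let B := Module.finBasis F C
  let A := Matrix.of fun j i => (B j : Fin n → F) i ^ q
  have hspan : C = Submodule.span F (Set.range fun j => (B j : Fin n → F)) := by
    rw [Set.range_comp' Subtype.val B, ← Submodule.coe_subtype, ← Submodule.map_span, B.span_eq,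
      Submodule.map_top, Submodule.range_subtype]
  have hker : dualH q n C = A.mulVecLin.ker := by
    ext x
    conv_lhs => rw [hspan]
    simp only [mem_dualH_span_range φ hφ, LinearMap.mem_ker, funext_iff, Matrix.mulVecLin_apply,
      Matrix.mulVec, dotProduct, mul_comm (A _ _), Pi.zero_apply]
    rfl
  have hrank := A.mulVecLin.finrank_range_add_finrank_ker
  have hrange := Submodule.finrank_le A.mulVecLin.range
  rw [Module.finrank_fin_fun] at hrank hrange
  rw [hker]
  omega

end HermitianDual

section ReedSolomon

variable {F : Type*} [Field F] {q n s : ℕ} {b v : Fin n → F}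

/-- The generalized Reed–Solomon code of dimension `s` with evaluation points `b` and column
multipliers `v`, given by the monomial generators `(vᵢ bᵢʲ)ᵢ`, `j < s`. -/
def grsCode (b v : Fin n → F) (s : ℕ) : Submodule F (Fin n → F) :=
  Submodule.span F (Set.range fun (j : Fin s) i => v i * b i ^ (j : ℕ))

theorem finrank_grsCode_le : Module.finrank F (grsCode b v s) ≤ s :=
  (finrank_range_le_card _).trans_eq (Fintype.card_fin s)

theorem grsCode_le_dualH_grsCode (φ : F →+* F) (hφ : ∀ x, φ x = x ^ q)
    (h : ∀ j < s, ∀ l < s, ∑ i, v i ^ (q + 1) * b i ^ (q * j + l) = 0) :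
    grsCode b v s ≤ dualH q n (grsCode b v s) := by
  refine Submodule.span_le.mpr ?_
  rintro _ ⟨l, rfl⟩
  refine (mem_dualH_span_range φ hφ).mpr fun j => ?_
  rw [← h j j.2 l l.2]
  exact sum_congr rfl fun i _ => by ring

theorem lt_wt_of_mem_dualH_grsCode (φ : F →+* F) (hφ : ∀ x, φ x = x ^ q)
    (hb : Function.Injective b) (hv : ∀ i, v i ≠ 0) {x : Fin n → F}
    (hx : x ∈ dualH q n (grsCode b v s)) (hx0 : x ≠ 0) : s < wt x := by
  have hvq : ∀ i, v i ^ q ≠ 0 := fun i => pow_ne_zero q (hv i)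
  rw [← wt_mul_of_forall_ne_zero x hvq]
  refine lt_wt_of_sum_mul_pow_eq_zero (b := φ ∘ b) (φ.injective.comp hb) ?_ fun j hj => ?_
  · obtain ⟨i, hi⟩ := Function.ne_iff.mp hx0
    exact Function.ne_iff.mpr ⟨i, mul_ne_zero hi (hvq i)⟩
  · rw [← (mem_dualH_span_range φ hφ).mp hx ⟨j, hj⟩]
    exact sum_congr rfl fun i _ => by rw [Function.comp_apply, hφ]; ring

theorem dualH_dualH_grsCode_le_and_isLeast_wt (φ : F →+* F) (hφ : ∀ x, φ x = x ^ q)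
    (hb : Function.Injective b) (hv : ∀ i, v i ≠ 0) (hn : n ≠ 0)
    (h : ∀ j < s, ∀ l < s, ∑ i, v i ^ (q + 1) * b i ^ (q * j + l) = 0) :
    dualH q n (dualH q n (grsCode b v s)) ≤ dualH q n (grsCode b v s) ∧
      Module.finrank F (dualH q n (grsCode b v s)) = n - s ∧
      IsLeast {d : ℕ | ∃ x ∈ dualH q n (grsCode b v s), x ≠ 0 ∧ wt x = d} (s + 1) := by
  have hdim : n ≤ Module.finrank F (dualH q n (grsCode b v s)) + s :=
    (le_finrank_dualH_add_finrank φ hφ _).trans (Nat.add_le_add_left finrank_grsCode_le _)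
  have hweights : (fun i => v i ^ (q + 1)) ≠ 0 :=
    Function.ne_iff.mpr ⟨⟨0, Nat.pos_of_ne_zero hn⟩, pow_ne_zero _ (hv _)⟩
  have hsn : s < n := (lt_wt_of_sum_mul_pow_eq_zero hb hweights fun l hl => by
    simpa only [mul_zero, zero_add] using h 0 (Nat.zero_lt_of_lt hl) l hl).trans_le (wt_le _)
  exact ⟨dualH_anti (grsCode_le_dualH_grsCode φ hφ h), finrank_eq_and_isLeast_wt hsn hdim
    fun x hx => lt_wt_of_mem_dualH_grsCode φ hφ hb hv hx⟩

end ReedSolomon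

theorem sq_tsub_one_eq_mul (q : ℕ) : q ^ 2 - 1 = (q - 1) * (q + 1) := by
  rw [sq, mul_self_tsub_one, mul_comm]

section FiniteField

variable {F : Type*} [Field F] [Fintype F]

theorem exists_ringHom_apply_eq_pow {q k : ℕ} (hk : k ≠ 0) (hF : Fintype.card F = q ^ k) :
    ∃ φ : F →+* F, ∀ x, φ x = x ^ q := by
  have hq : IsPrimePow q := (isPrimePow_pow_iff hk).mp (hF ▸ Fintype.isPrimePow_card_of_field)
  obtain ⟨p, e, hp, -, rfl⟩ := (isPrimePow_nat_iff q).mp hq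
  have := Fact.mk hp
  have : CharP F p := charP_of_card_eq_prime_pow (hF.trans (pow_mul p e k).symm)
  exact ⟨iterateFrobenius F p e, iterateFrobenius_def p e⟩

theorem exists_isPrimitiveRoot_of_dvd_card_sub_one {K : ℕ} (hK : K ∣ Fintype.card F - 1) :
    ∃ ζ : F, IsPrimitiveRoot ζ K := by
  classical
  obtain ⟨L, hL⟩ := hK
  obtain ⟨g, hg⟩ := IsCyclic.exists_ofOrder_eq_natCard (α := Fˣ)
  rw [Nat.card_eq_fintype_card, Fintype.card_units] at hg
  have hprim : IsPrimitiveRoot (g : F) (Fintype.card F - 1) :=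
    IsPrimitiveRoot.coe_units_iff.mpr (hg ▸ IsPrimitiveRoot.orderOf g)
  exact ⟨_, hprim.pow (Nat.sub_pos_of_lt Fintype.one_lt_card) (hL.trans (mul_comm K L))⟩

theorem exists_pow_eq_of_pow_eq_one {K L : ℕ} (hKL : K * L = Fintype.card F - 1) {x : F}
    (hx : x ^ K = 1) : ∃ y, y ≠ 0 ∧ y ^ L = x := by
  have hpos : 0 < K * L := hKL ▸ Nat.sub_pos_of_lt Fintype.one_lt_card
  obtain ⟨g, hg⟩ := exists_isPrimitiveRoot_of_dvd_card_sub_one (F := F) dvd_rfl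
  have : NeZero K := ⟨(Nat.pos_of_mul_pos_right hpos).ne'⟩
  obtain ⟨i, -, hi⟩ :=
    (hg.pow (hKL ▸ hpos) (hKL.symm.trans (mul_comm K L))).eq_pow_of_pow_eq_one hx
  exact ⟨g ^ i, pow_ne_zero i (hg.ne_zero (hKL ▸ hpos.ne')), by rw [← hi, pow_right_comm]⟩

theorem one_lt_of_card_eq_sq {q : ℕ} (hF : Fintype.card F = q ^ 2) : 1 < q :=
  (one_lt_pow_iff two_ne_zero).mp (hF ▸ Fintype.one_lt_card)

end FiniteField

section PowerFibre

variable {R : Type*} [CommRing R] [IsDomain R] {K : ℕ} {ζ : R}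

open Polynomial

theorem card_nthRootsFinset_pow (hζ : IsPrimitiveRoot ζ K) {u : R} (hu : u ≠ 0) :
    #(nthRootsFinset K (u ^ K)) = K := by
  classical
  rw [nthRootsFinset_def, Multiset.toFinset_card_of_nodup (hζ.nthRoots_nodup (pow_ne_zero K hu)),
    hζ.card_nthRoots, if_pos ⟨u, rfl⟩]

theorem sum_nthRootsFinset_pow_eq_zero (hζ : IsPrimitiveRoot ζ K) (c : R) {E : ℕ}
    (hE : ¬K ∣ E) : ∑ x ∈ nthRootsFinset K c, x ^ E = 0 := by
  rcases K.eq_zero_or_pos with rfl | hK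
  · simp only [nthRootsFinset_zero, sum_empty]
  have hmaps : Set.MapsTo (ζ * ·) (nthRootsFinset K c) (nthRootsFinset K c) := fun x hx => by
    have hx := (mem_nthRootsFinset hK c).mp hx
    exact (mem_nthRootsFinset hK c).mpr (by rw [mul_pow, hζ.pow_eq_one, hx, one_mul])
  have hinj : Set.InjOn (ζ * ·) (nthRootsFinset K c : Set R) :=
    (mul_right_injective₀ (hζ.ne_zero hK.ne')).injOn
  have hinv : ζ ^ E * ∑ x ∈ nthRootsFinset K c, x ^ E = ∑ x ∈ nthRootsFinset K c, x ^ E := by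
    simp only [mul_sum, ← mul_pow]
    exact sum_nbij (ζ * ·) hmaps hinj (surjOn_of_injOn_of_card_le _ hmaps hinj le_rfl)
      fun _ _ => rfl
  exact (mul_left_eq_self₀.mp hinv).resolve_left fun h => hE (hζ.dvd_of_pow_eq_one E h)

theorem mul_pow_sub_pow_mul_eq_zero_iff {n : ℕ} (hn : n ≠ 0) {u x : R}
    (hu : u ≠ 0) (hx : x ≠ 0) :
    u * x ^ n - u ^ n * x = 0 ↔ x ^ (n - 1) = u ^ (n - 1) := by
  rw [show u * x ^ n - u ^ n * x = u * x * (x ^ (n - 1) - u ^ (n - 1)) by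
      rw [← mul_pow_sub_one hn x, ← mul_pow_sub_one hn u]; ring,
    mul_eq_zero_iff_left (mul_ne_zero hu hx), sub_eq_zero]

end PowerFibre

section Divisibility

variable {q a m s j l : ℕ}

theorem pos_of_add_one_eq_mul (hq : q + 1 = 2 * a * m) : 0 < a ∧ 0 < m := by
  have ham : 0 < a * m := by lia
  exact CanonicallyOrderedAdd.mul_pos.mp ham

theorem not_dvd_of_add_one_eq (hq : q + 1 = 2 * a * m) (hs : s + 2 ≤ (a + 1) * m) (hj : j < s)
    (hl : l < s) : ¬m * (q - 1) ∣ q * j + l + (q + 1 - m) := by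
  rintro ⟨t, ht⟩
  obtain ⟨ha, hm⟩ := pos_of_add_one_eq_mul hq
  have hma : m ≤ a * m := Nat.le_mul_of_pos_left m ha
  have hq1 : 1 < q := by nlinarith
  have hmq : m ≤ q + 1 := by lia
  zify [hq1.le, hmq] at *
  have key : (q - 1 : ℤ) * (m * t - (j + 1)) = (j + 1) + (l + 1) - m := by linarith
  -- The right-hand side lies strictly between `-(q - 1)` and `2 * (q - 1)`.
  have hlow : -1 < (m * t - (j + 1) : ℤ) := by nlinarith
  have hupp : (m * t - (j + 1) : ℤ) < 2 := by nlinarith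
  obtain hu | hu : (m * t - (j + 1) : ℤ) = 0 ∨ (m * t - (j + 1) : ℤ) = 1 := by omega
  · have hmj : (m : ℤ) ≤ j + 1 := Int.le_of_dvd (by positivity) ⟨t, by linarith⟩
    rw [hu] at key
    linarith
  · have hj' : (j + 1 : ℤ) = m * t - 1 := by linarith
    have hl' : (l + 1 : ℤ) = m * (2 * a + 1 - t) - 1 := by
      rw [hu] at key
      linarith
    have hta : (m * t : ℤ) < m * (a + 1) := by linarith
    have hat : (m * (2 * a + 1 - t) : ℤ) < m * (a + 1) := by linarith
    have := lt_of_mul_lt_mul_left hta hm.le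
    have := lt_of_mul_lt_mul_left hat hm.le
    omega

theorem not_two_mul_dvd_of_odd (ha : Odd a) (hq : q + 1 = 2 * a * m) (hs : s + 2 ≤ (a + 1) * m)
    (hj : j ≤ s) (hl : l ≤ s) (hpos : 0 < j + l) (hlt : j + l < 2 * s) :
    ¬2 * m * (q - 1) ∣ q * j + l := by
  rintro ⟨t, ht⟩
  obtain ⟨ha0, hm⟩ := pos_of_add_one_eq_mul hq
  have hma : m ≤ a * m := Nat.le_mul_of_pos_left m ha0
  have hq1 : 1 < q := by nlinarith
  obtain ⟨b, rfl⟩ := ha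
  zify [hq1.le] at *
  have key : (q - 1 : ℤ) * (2 * m * t - j) = j + l := by linarith
  -- The right-hand side lies strictly between `0` and `2 * (q - 1)`.
  have hlow : 0 < (2 * m * t - j : ℤ) := by nlinarith
  have hupp : (2 * m * t - j : ℤ) < 2 := by nlinarith
  have hu : (2 * m * t - j : ℤ) = 1 := by omega
  have hj' : (j : ℤ) = m * (2 * t) - 1 := by linarith
  have hl' : (l : ℤ) = m * (2 * (2 * b + 1 - t)) - 1 := by
    rw [hu] at key
    linarith
  have htb : (m * (2 * t) : ℤ) < m * (2 * b + 1 + 1) := by linarith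
  have hbt : (m * (2 * (2 * b + 1 - t)) : ℤ) < m * (2 * b + 1 + 1) := by linarith
  have := lt_of_mul_lt_mul_left htb hm.le
  have := lt_of_mul_lt_mul_left hbt hm.le
  omega

end Divisibility

section HermitianWeights

variable {F : Type*} [Field F] {q s : ℕ}

/-- Weights in the fixed field of `x ↦ x ^ q`, nowhere zero on `S`, that make the weighted power
sums of exponent `q * j + l` over `S` vanish for `j, l < s`. When every such weight is a norm
`v ^ (q + 1)`, the code `grsCode` with evaluation points `S` and multipliers `v` is Hermitian
self-orthogonal. -/
def HasHermitianWeights (q s : ℕ) (S : Finset F) : Prop :=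
  ∃ w : F → F, (∀ x ∈ S, w x ≠ 0 ∧ w x ^ q = w x) ∧
    ∀ j < s, ∀ l < s, ∑ x ∈ S, w x * x ^ (q * j + l) = 0

namespace HasHermitianWeights

theorem union [DecidableEq F] {S T : Finset F} (hS : HasHermitianWeights q s S)
    (hT : HasHermitianWeights q s T) (hST : Disjoint S T) : HasHermitianWeights q s (S ∪ T) := by
  obtain ⟨w, hw, hwsum⟩ := hS
  obtain ⟨z, hz, hzsum⟩ := hT
  have hpwS : ∀ x ∈ S, S.piecewise w z x = w x := fun _ => S.piecewise_eq_of_mem w z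
  have hpwT : ∀ x ∈ T, S.piecewise w z x = z x := fun _ hx =>
    S.piecewise_eq_of_notMem w z (disjoint_right.mp hST hx)
  refine ⟨S.piecewise w z, fun x hx => ?_, fun j hj l hl => ?_⟩
  · rcases mem_union.mp hx with hx | hx
    · simpa only [hpwS x hx] using hw x hx
    · simpa only [hpwT x hx] using hz x hx
  · rw [sum_union hST, ← hwsum j hj l hl, ← add_zero (∑ x ∈ S, w x * _), ← hzsum j hj l hl]
    exact congr_arg₂ (· + ·) (sum_congr rfl fun x hx => by rw [hpwS x hx])
      (sum_congr rfl fun x hx => by rw [hpwT x hx])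

theorem exists_of_fibres {ι : Type*} (π : F → ι) {N : ℕ} (T : Finset ι)
    (h : ∀ c ∈ T, ∃ B : Finset F, HasHermitianWeights q s B ∧ #B = N ∧ ∀ x ∈ B, π x = c) :
    ∃ S : Finset F, HasHermitianWeights q s S ∧ #S = #T * N ∧ ∀ x ∈ S, π x ∈ T := by
  classical
  induction T using Finset.induction with
  | empty => exact ⟨∅, ⟨1, by simp⟩, by simp⟩
  | insert c T hc ih =>
    obtain ⟨S, hS, hcard, hST⟩ := ih fun d hd => h d (mem_insert_of_mem hd)
    obtain ⟨B, hB, hBcard, hBc⟩ := h c (mem_insert_self c T)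
    have hBS : Disjoint B S := disjoint_left.mpr fun x hxB hxS => hc (hBc x hxB ▸ hST x hxS)
    refine ⟨B ∪ S, hB.union hS hBS, ?_, fun x hx => ?_⟩
    · rw [card_union_of_disjoint hBS, hBcard, hcard, card_insert_of_notMem hc]
      ring
    · rcases mem_union.mp hx with hx | hx
      · exact mem_insert.mpr (Or.inl (hBc x hx))
      · exact mem_insert_of_mem (hST x hx)

theorem exists_dualH_le [Fintype F] (hF : Fintype.card F = q ^ 2) {S : Finset F}
    (hS : HasHermitianWeights q s S) (hne : S.Nonempty) :
    ∃ C : Submodule F (Fin #S → F), dualH q #S C ≤ C ∧ Module.finrank F C = #S - s ∧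
      IsLeast {d : ℕ | ∃ x ∈ C, x ≠ 0 ∧ wt x = d} (s + 1) := by
  obtain ⟨w, hw, hwsum⟩ := hS
  obtain ⟨φ, hφ⟩ := exists_ringHom_apply_eq_pow two_ne_zero hF
  have hnorm : ∀ x : S, ∃ v, v ≠ 0 ∧ v ^ (q + 1) = w x := fun x => by
    obtain ⟨hw0, hwq⟩ := hw x x.2
    have hcard : (q - 1) * (q + 1) = Fintype.card F - 1 := by rw [hF, sq_tsub_one_eq_mul]
    refine exists_pow_eq_of_pow_eq_one hcard (mul_left_cancel₀ hw0 ?_)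
    rw [mul_pow_sub_one (one_lt_of_card_eq_sq hF).ne_bot, hwq, mul_one]
  choose v hv0 hv using hnorm
  refine ⟨_, dualH_dualH_grsCode_le_and_isLeast_wt (b := fun i => (S.equivFin.symm i : F))
    (v := fun i => v (S.equivFin.symm i)) φ hφ
    (Subtype.val_injective.comp S.equivFin.symm.injective) (fun i => hv0 _) hne.card_ne_zero
    fun j hj l hl => ?_⟩
  simp only [hv]
  rw [S.equivFin.symm.sum_comp fun x : S => w x * (x : F) ^ (q * j + l),
    sum_coe_sort S fun x => w x * x ^ (q * j + l), hwsum j hj l hl]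

end HasHermitianWeights

end HermitianWeights

section EvaluationPoints

variable {F : Type*} [Field F] [Fintype F] {q a m s : ℕ}

open Polynomial

theorem hasHermitianWeights_nthRootsFinset (hF : Fintype.card F = q ^ 2) (hq : q + 1 = 2 * a * m)
    (hs : s + 2 ≤ (a + 1) * m) {u : F} (hu : u ≠ 0) :
    HasHermitianWeights q s (nthRootsFinset (m * (q - 1)) (u ^ (m * (q - 1)))) := by
  have hq1 := one_lt_of_card_eq_sq hF
  obtain ⟨-, hm⟩ := pos_of_add_one_eq_mul hq
  have hK : 0 < m * (q - 1) := Nat.mul_pos hm (Nat.sub_pos_of_lt hq1)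
  obtain ⟨ζ, hζ⟩ := exists_isPrimitiveRoot_of_dvd_card_sub_one (F := F) (K := m * (q - 1))
    ⟨2 * a, by rw [hF, sq_tsub_one_eq_mul, hq]; ring⟩
  refine ⟨fun x => u ^ m * x ^ (q + 1 - m), fun x hx => ⟨?_, ?_⟩, fun j hj l hl => ?_⟩
  · exact mul_ne_zero (pow_ne_zero m hu)
      (pow_ne_zero _ (ne_zero_of_mem_nthRootsFinset (pow_ne_zero _ hu) hx))
  · have hmq : m ≤ q := by
      have h2m : 2 * m ≤ q + 1 := Nat.le_of_dvd q.succ_pos ⟨a, by rw [hq]; ring⟩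
      omega
    have hexp : m * (q - 1) + (q + 1 - m) * q = q ^ 2 + (q - m) := by
      zify [hq1.le, hmq, hmq.trans q.le_succ]
      ring
    calc (u ^ m * x ^ (q + 1 - m)) ^ q
        = u ^ m * (u ^ (m * (q - 1)) * x ^ ((q + 1 - m) * q)) := by
          rw [mul_pow, pow_right_comm, ← mul_pow_sub_one hq1.ne_bot, mul_pow, mul_assoc, ← pow_mul',
            ← pow_mul]
      _ = u ^ m * (x ^ q ^ 2 * x ^ (q - m)) := by
          rw [← (mem_nthRootsFinset hK _).mp hx, ← pow_add, hexp, pow_add]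
      _ = u ^ m * x ^ (q + 1 - m) := by
          rw [← hF, FiniteField.pow_card, ← pow_succ', Nat.sub_add_comm hmq]
  · simp only [mul_assoc, ← pow_add, ← mul_sum, add_comm (q + 1 - m)]
    rw [sum_nthRootsFinset_pow_eq_zero hζ _ (not_dvd_of_add_one_eq hq hs hj hl), mul_zero]

theorem exists_pow_eq_neg_self (hF : Fintype.card F = q ^ 2) (h2 : 2 ∣ q + 1) :
    ∃ h : F, h ≠ 0 ∧ h ^ q = -h := by
  have hq1 := one_lt_of_card_eq_sq hF
  obtain ⟨η, hη⟩ := exists_isPrimitiveRoot_of_dvd_card_sub_one (F := F) (K := (q - 1) * 2)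
    (by rw [hF, sq_tsub_one_eq_mul]; exact mul_dvd_mul_left _ h2)
  have hneg : η ^ (q - 1) = -1 :=
    (hη.pow (by omega) rfl).eq_neg_one_of_two_right
  exact ⟨η, hη.ne_zero (by omega), by rw [← mul_pow_sub_one hq1.ne_bot η, hneg, mul_neg_one]⟩

theorem hasHermitianWeights_nthRootsFinset_sdiff [DecidableEq F] (hF : Fintype.card F = q ^ 2)
    (ha : Odd a) (hq : q + 1 = 2 * a * m) (hs : s + 2 ≤ (a + 1) * m) {u : F} (hu : u ≠ 0) :
    HasHermitianWeights q s (nthRootsFinset (2 * m * (q - 1)) (u ^ (2 * m * (q - 1))) \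
      nthRootsFinset (q - 1) (u ^ (q - 1))) := by
  have hq1 := one_lt_of_card_eq_sq hF
  obtain ⟨φ, hφ⟩ := exists_ringHom_apply_eq_pow two_ne_zero hF
  obtain ⟨h, hh0, hh⟩ := exists_pow_eq_neg_self hF ⟨a * m, by rw [hq, mul_assoc]⟩
  obtain ⟨ζ, hζ⟩ := exists_isPrimitiveRoot_of_dvd_card_sub_one (F := F) (K := 2 * m * (q - 1))
    ⟨a, by rw [hF, sq_tsub_one_eq_mul, hq]; ring⟩
  have hw0 : ∀ x ∈ nthRootsFinset (2 * m * (q - 1)) (u ^ (2 * m * (q - 1))),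
      h * (u * x ^ q - u ^ q * x) = 0 ↔ x ∈ nthRootsFinset (q - 1) (u ^ (q - 1)) := fun x hx => by
    rw [mul_eq_zero_iff_left hh0, mem_nthRootsFinset (Nat.sub_pos_of_lt hq1),
      mul_pow_sub_pow_mul_eq_zero_iff hq1.ne_bot hu
        (ne_zero_of_mem_nthRootsFinset (pow_ne_zero _ hu) hx)]
  refine ⟨fun x => h * (u * x ^ q - u ^ q * x), fun x hx => ⟨?_, ?_⟩, fun j hj l hl => ?_⟩
  · rw [mem_sdiff] at hx
    exact (hw0 x hx.1).not.mpr hx.2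
  · have hfrob : ∀ y : F, (y ^ q) ^ q = y := fun y => by
      rw [← pow_mul, ← sq, ← hF, FiniteField.pow_card]
    rw [← hφ, map_mul, map_sub, map_mul, map_mul]
    simp only [hφ, hfrob, hh]
    ring
  · rw [sum_subset sdiff_subset fun x hx hx' => by
      refine mul_eq_zero_of_left ((hw0 x hx).mpr ?_) _
      simpa only [mem_sdiff, hx, true_and, not_not] using hx']
    have hsum : ∀ j' l', j' ≤ s → l' ≤ s → 0 < j' + l' → j' + l' < 2 * s →
        ∑ x ∈ nthRootsFinset (2 * m * (q - 1)) (u ^ (2 * m * (q - 1))), x ^ (q * j' + l') = 0 :=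
      fun j' l' hj' hl' hpos hlt => sum_nthRootsFinset_pow_eq_zero hζ _
        (not_two_mul_dvd_of_odd ha hq hs hj' hl' hpos hlt)
    have hsplit : ∀ x, h * (u * x ^ q - u ^ q * x) * x ^ (q * j + l) =
        h * u * x ^ (q * (j + 1) + l) - h * u ^ q * x ^ (q * j + (l + 1)) := fun x => by ring
    simp only [hsplit, sum_sub_distrib, ← mul_sum]
    rw [hsum (j + 1) l (by omega) (by omega) (by omega) (by omega),
      hsum j (l + 1) (by omega) (by omega) (by omega) (by omega), mul_zero, mul_zero, sub_zero]

end EvaluationPoints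

section Assembly

variable {F : Type*} [Field F] [Fintype F] {q a m s c k : ℕ}

open Polynomial

theorem exists_subset_nthRootsFinset_sq_notMem (ha : a ≠ 0) (hdvd : 2 * a ∣ Fintype.card F - 1)
    (hck : 2 * c + k ≤ 2 * a) :
    ∃ R ⊆ nthRootsFinset a (1 : F), ∃ T ⊆ nthRootsFinset (2 * a) (1 : F),
      #R = c ∧ #T = k ∧ ∀ t ∈ T, t ^ 2 ∉ R := by
  classical
  obtain ⟨ζ, hζ⟩ := exists_isPrimitiveRoot_of_dvd_card_sub_one hdvd
  have hζa : IsPrimitiveRoot (ζ ^ 2) a := hζ.pow (by omega) rfl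
  obtain ⟨R, hR, hRc⟩ := exists_subset_card_eq (s := nthRootsFinset a (1 : F)) (n := c)
    (by rw [hζa.card_nthRootsFinset]; omega)
  have hroots : #(R.biUnion fun r => nthRootsFinset 2 r) ≤ c * 2 := by
    rw [← hRc]
    refine card_biUnion_le_card_mul _ _ 2 fun r _ => ?_
    rw [nthRootsFinset_def]
    exact (Multiset.toFinset_card_le _).trans (card_nthRoots 2 r)
  obtain ⟨T, hT, hTk⟩ := exists_subset_card_eq (n := k)
    (s := nthRootsFinset (2 * a) (1 : F) \ R.biUnion fun r => nthRootsFinset 2 r) (by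
      refine le_trans ?_ (le_card_sdiff _ _)
      rw [hζ.card_nthRootsFinset]
      omega)
  refine ⟨R, hR, T, hT.trans sdiff_subset, hRc, hTk, fun t ht htR => ?_⟩
  exact (mem_sdiff.mp (hT ht)).2 (mem_biUnion.mpr ⟨_, htR, (mem_nthRootsFinset two_pos _).mpr rfl⟩)

theorem exists_fibre_hasHermitianWeights (hF : Fintype.card F = q ^ 2) (hq : q + 1 = 2 * a * m)
    (hs : s + 2 ≤ (a + 1) * m) {t : F} (ht : t ^ (2 * a) = 1) :
    ∃ B : Finset F, HasHermitianWeights q s B ∧ #B = m * (q - 1) ∧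
      ∀ x ∈ B, x ^ (m * (q - 1)) = t := by
  have hq1 := one_lt_of_card_eq_sq hF
  obtain ⟨-, hm⟩ := pos_of_add_one_eq_mul hq
  have hK : 2 * a * (m * (q - 1)) = Fintype.card F - 1 := by
    rw [hF, sq_tsub_one_eq_mul, hq]
    ring
  obtain ⟨ζ, hζ⟩ := exists_isPrimitiveRoot_of_dvd_card_sub_one (F := F) (Dvd.intro_left _ hK)
  obtain ⟨u, hu, rfl⟩ := exists_pow_eq_of_pow_eq_one hK ht
  exact ⟨_, hasHermitianWeights_nthRootsFinset hF hq hs hu, card_nthRootsFinset_pow hζ hu,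
    fun x => (mem_nthRootsFinset (Nat.mul_pos hm (Nat.sub_pos_of_lt hq1)) _).mp⟩

theorem exists_puncturedFibre_hasHermitianWeights (hF : Fintype.card F = q ^ 2) (ha : Odd a)
    (hq : q + 1 = 2 * a * m) (hs : s + 2 ≤ (a + 1) * m) {r : F} (hr : r ^ a = 1) :
    ∃ B : Finset F, HasHermitianWeights q s B ∧ #B = (2 * m - 1) * (q - 1) ∧
      ∀ x ∈ B, x ^ (2 * m * (q - 1)) = r := by
  classical
  have hq1 := Nat.sub_pos_of_lt (one_lt_of_card_eq_sq hF)
  obtain ⟨-, hm⟩ := pos_of_add_one_eq_mul hq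
  have hpos : 0 < 2 * m * (q - 1) := by positivity
  have hK : a * (2 * m * (q - 1)) = Fintype.card F - 1 := by
    rw [hF, sq_tsub_one_eq_mul, hq]
    ring
  obtain ⟨ζ, hζ⟩ := exists_isPrimitiveRoot_of_dvd_card_sub_one (F := F) (Dvd.intro_left _ hK)
  obtain ⟨u, hu, rfl⟩ := exists_pow_eq_of_pow_eq_one hK hr
  refine ⟨_, hasHermitianWeights_nthRootsFinset_sdiff hF ha hq hs hu, ?_, fun x hx =>
    (mem_nthRootsFinset hpos _).mp (sdiff_subset hx)⟩
  have hsub : nthRootsFinset (q - 1) (u ^ (q - 1)) ⊆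
      nthRootsFinset (2 * m * (q - 1)) (u ^ (2 * m * (q - 1))) := fun x hx => by
    rw [mem_nthRootsFinset hpos, pow_mul', (mem_nthRootsFinset hq1 _).mp hx, ← pow_mul']
  rw [card_sdiff_of_subset hsub, card_nthRootsFinset_pow hζ hu,
    card_nthRootsFinset_pow (hζ.pow hpos rfl) hu, Nat.sub_mul, one_mul]

theorem exists_hasHermitianWeights_card_eq (hF : Fintype.card F = q ^ 2) (hq : q + 1 = 2 * a * m)
    (hck : 2 * c + k ≤ 2 * a) (hc : c = 0 ∨ Odd a) (hs : s + 2 ≤ (a + 1) * m) :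
    ∃ S : Finset F, HasHermitianWeights q s S ∧
      #S = k * (m * (q - 1)) + c * ((2 * m - 1) * (q - 1)) := by
  classical
  obtain ⟨ha, -⟩ := pos_of_add_one_eq_mul hq
  obtain ⟨R, hR, T, hT, rfl, rfl, hTR⟩ := exists_subset_nthRootsFinset_sq_notMem (F := F) ha.ne'
    ⟨m * (q - 1), by rw [hF, sq_tsub_one_eq_mul, hq]; ring⟩ hck
  obtain ⟨A, hA, hAcard, hAT⟩ := HasHermitianWeights.exists_of_fibres (· ^ (m * (q - 1))) T
    fun t ht => exists_fibre_hasHermitianWeights hF hq hs <|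
      (mem_nthRootsFinset (by omega) _).mp (hT ht)
  obtain ⟨B, hB, hBcard, hBR⟩ := HasHermitianWeights.exists_of_fibres (· ^ (2 * m * (q - 1))) R
    fun r hr => exists_puncturedFibre_hasHermitianWeights hF
      (hc.resolve_left (card_ne_zero_of_mem hr)) hq hs ((mem_nthRootsFinset ha _).mp (hR hr))
  have hAB : Disjoint A B := disjoint_left.mpr fun x hxA hxB => hTR _ (hAT x hxA) <| by
    rw [← pow_mul', ← mul_assoc]
    exact hBR x hxB
  exact ⟨A ∪ B, hA.union hB hAB, by rw [card_union_of_disjoint hAB, hAcard, hBcard]⟩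

theorem length_formula_eq (hq : q + 1 = 2 * a * m) (hq1 : 1 < q) :
    k * (q ^ 2 - 1) / (2 * a) + c * ((q ^ 2 - 1) / a - q + 1) =
      k * (m * (q - 1)) + c * ((2 * m - 1) * (q - 1)) := by
  obtain ⟨ha, hm⟩ := pos_of_add_one_eq_mul hq
  have h₁ : q ^ 2 - 1 = 2 * a * (m * (q - 1)) := by
    rw [sq_tsub_one_eq_mul, hq]
    ring
  have h₂ : q ^ 2 - 1 = a * (2 * m * (q - 1)) := by
    rw [h₁]
    ring
  have hle : 2 * (q - 1) ≤ 2 * m * (q - 1) := by gcongr; omega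
  rw [h₂, Nat.mul_div_cancel_left _ ha, ← h₂, h₁, mul_left_comm,
    Nat.mul_div_cancel_left _ (by positivity), Nat.sub_mul, one_mul]
  congr 2
  omega

end Assembly

theorem stmt_10_general {q a m : ℕ} (hq : q + 1 = 2 * a * m) {F : Type*} [Field F] [Fintype F]
    (hF : Fintype.card F = q ^ 2) {c k s : ℕ} (hck : 2 * c + k ≤ 2 * a) (hne : 1 ≤ c + k)
    (hc : c = 0 ∨ Odd a) (hs : s + 2 ≤ (a + 1) * m) :
    ∃ C : Submodule F (Fin (k * (q ^ 2 - 1) / (2 * a) + c * ((q ^ 2 - 1) / a - q + 1)) → F),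
      dualH q (k * (q ^ 2 - 1) / (2 * a) + c * ((q ^ 2 - 1) / a - q + 1)) C ≤ C ∧
      Module.finrank F C = (k * (q ^ 2 - 1) / (2 * a) + c * ((q ^ 2 - 1) / a - q + 1)) - s ∧
      IsLeast {d : ℕ | ∃ x ∈ C, x ≠ 0 ∧ wt x = d} (s + 1) := by
  have hq1 := one_lt_of_card_eq_sq hF
  obtain ⟨S, hS, hcard⟩ := exists_hasHermitianWeights_card_eq hF hq hck hc hs
  rw [length_formula_eq hq hq1, ← hcard]
  obtain ⟨-, hm⟩ := pos_of_add_one_eq_mul hq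
  have hr : 0 < q - 1 := Nat.sub_pos_of_lt hq1
  have hle : k + c ≤ #S := hcard ▸ Nat.add_le_add (Nat.le_mul_of_pos_right k (Nat.mul_pos hm hr))
    (Nat.le_mul_of_pos_right c (Nat.mul_pos (by omega) hr))
  exact hS.exists_dualH_le hF (card_pos.mp (by omega))

/-- case q = 2am−1 with a odd:
there exists an [n, n−s, s+1]_{q²} Hermitian dual-containing code with
n = (c₂+c₃)(q²−1)/(2a) + c₁((q²−1)/a − q + 1), for c₁,c₂,c₃ ≥ 0 with
c₁+c₂ ≤ a, c₁+c₃ ≤ a, c₁+c₂+c₃ ≥ 1, and 1 ≤ s ≤ (a+1)m − 2. -/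
theorem stmt_10 (q a m : ℕ) (ha : 0 < a) (haodd : Odd a) (hm : 0 < m)
    (hq : q = 2 * a * m - 1) (hodd : Odd q) (hpp : IsPrimePow q)
    (F : Type*) [Field F] [Fintype F] (hF : Fintype.card F = q ^ 2)
    (c₁ c₂ c₃ s : ℕ) (h12 : c₁ + c₂ ≤ a) (h13 : c₁ + c₃ ≤ a)
    (h123 : 1 ≤ c₁ + c₂ + c₃) (hs1 : 1 ≤ s) (hs2 : s ≤ (a + 1) * m - 2) :
    ∃ C : Submodule F (Fin ((c₂ + c₃) * (q ^ 2 - 1) / (2 * a) + c₁ * ((q ^ 2 - 1) / a - q + 1)) → F),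
      dualH q ((c₂ + c₃) * (q ^ 2 - 1) / (2 * a) + c₁ * ((q ^ 2 - 1) / a - q + 1)) C ≤ C ∧
      Module.finrank F C = ((c₂ + c₃) * (q ^ 2 - 1) / (2 * a) + c₁ * ((q ^ 2 - 1) / a - q + 1)) - s ∧
      IsLeast {d : ℕ | ∃ x ∈ C, x ≠ 0 ∧ wt x = d} (s + 1) := by
  exact stmt_10_general (m := m) (by have := hodd.pos; omega) hF (by omega) (by omega)
    (.inr haodd) (by omega)
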